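/- arXiv:1008.1124 — 5 statements merged into one kernel-verified Lean document; each statement's English description precedes it below -/
import Mathlib

section
/- Let (γ, P) be a smooth solution of system (N) and let α : ℝ → ℝ³ be smooth. Then the pair (γ̄, P̄) defined by γ̄(t,ξ) = γ(t,ξ) + α(t) and P̄(t,ξ) = P(t,ξ) − γ(t,ξ)·α''(t) − ½ α(t)·α''(t) is again a smooth solution of system (N) (the generalized Galilean symmetry). -/
open Matrix

noncomputable section

abbrev V3 := Fin 3 → ℝ

noncomputable def Dt {E : Type*} [NormedAddCommGroup E] [NormedSpace ℝ E]
    (f : ℝ → ℝ → ℝ → ℝ → E) : ℝ → ℝ → ℝ → ℝ → E :=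
  fun t a b c => deriv (fun s => f s a b c) t

noncomputable def D1 {E : Type*} [NormedAddCommGroup E] [NormedSpace ℝ E]
    (f : ℝ → ℝ → ℝ → ℝ → E) : ℝ → ℝ → ℝ → ℝ → E :=
  fun t a b c => deriv (fun s => f t s b c) a

noncomputable def D2 {E : Type*} [NormedAddCommGroup E] [NormedSpace ℝ E]
    (f : ℝ → ℝ → ℝ → ℝ → E) : ℝ → ℝ → ℝ → ℝ → E :=
  fun t a b c => deriv (fun s => f t a s c) b

noncomputable def D3 {E : Type*} [NormedAddCommGroup E] [NormedSpace ℝ E]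
    (f : ℝ → ℝ → ℝ → ℝ → E) : ℝ → ℝ → ℝ → ℝ → E :=
  fun t a b c => deriv (fun s => f t a b s) c

def Smooth4 {E : Type*} [NormedAddCommGroup E] [NormedSpace ℝ E]
    (f : ℝ → ℝ → ℝ → ℝ → E) : Prop :=
  ContDiff ℝ (⊤ : ℕ∞) (fun q : ℝ × ℝ × ℝ × ℝ => f q.1 q.2.1 q.2.2.1 q.2.2.2)

/-- System (N). -/
def SystemN (γ : ℝ → ℝ → ℝ → ℝ → V3) (P : ℝ → ℝ → ℝ → ℝ → ℝ) : Prop :=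
  (∀ t a b c : ℝ,
      Dt (Dt γ) t a b c - D1 (D1 γ) t a b c
        + D1 P t a b c • crossProduct (D2 γ t a b c) (D3 γ t a b c)
        + D2 P t a b c • crossProduct (D3 γ t a b c) (D1 γ t a b c)
        + D3 P t a b c • crossProduct (D1 γ t a b c) (D2 γ t a b c) = 0)
    ∧ (∀ t a b c : ℝ,
      (Matrix.of ![D1 γ t a b c, D2 γ t a b c, D3 γ t a b c]).det = 1)

theorem deriv_aux_slice (p : ℝ → ℝ) (g : ℝ → V3) (v : V3) (k : ℝ) (x : ℝ)
    (hp : DifferentiableAt ℝ p x) (hg : DifferentiableAt ℝ g x) :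
    deriv (fun s => p s - g s ⬝ᵥ v - k) x = deriv p x - deriv g x ⬝ᵥ v := by
  have h := hasDerivAt_pi.1 hg.hasDerivAt
  have h2 : HasDerivAt (fun s => g s ⬝ᵥ v) (deriv g x ⬝ᵥ v) x := by
    simp only [dotProduct]
    exact HasDerivAt.fun_sum fun i _ => (h i).mul_const (v i)
  exact ((hp.hasDerivAt.sub h2).sub_const k).deriv

/-- Generalized Galilean symmetry of system (N): if `(γ, P)` is a smooth solution and
`α : ℝ → ℝ³` is smooth, then `γ̄ = γ + α(t)`,
`P̄ = P − γ·α'' − ½ α·α''` is again a smooth solution. -/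
theorem galilean_symmetry_systemN
    (γ : ℝ → ℝ → ℝ → ℝ → V3) (P : ℝ → ℝ → ℝ → ℝ → ℝ)
    (hγ : Smooth4 γ) (hP : Smooth4 P) (hsol : SystemN γ P)
    (α : ℝ → V3) (hα : ContDiff ℝ (⊤ : ℕ∞) α) :
    Smooth4 (fun t a b c => γ t a b c + α t) ∧
    Smooth4 (fun t a b c =>
      P t a b c - γ t a b c ⬝ᵥ deriv (deriv α) t
        - (1 / 2 : ℝ) * (α t ⬝ᵥ deriv (deriv α) t)) ∧
    SystemN (fun t a b c => γ t a b c + α t)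
      (fun t a b c =>
        P t a b c - γ t a b c ⬝ᵥ deriv (deriv α) t
          - (1 / 2 : ℝ) * (α t ⬝ᵥ deriv (deriv α) t)) := by
  have hα1 : ContDiff ℝ (⊤ : ℕ∞) (deriv α) := (contDiff_infty_iff_deriv.1 hα).2
  have hα2 : ContDiff ℝ (⊤ : ℕ∞) (deriv (deriv α)) := (contDiff_infty_iff_deriv.1 hα1).2
  have hdot : ∀ f g : ℝ × ℝ × ℝ × ℝ → V3, ContDiff ℝ (⊤ : ℕ∞) f → ContDiff ℝ (⊤ : ℕ∞) g →
      ContDiff ℝ (⊤ : ℕ∞) (fun q => f q ⬝ᵥ g q) := by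
    intro f g hf hg
    simp only [dotProduct]
    exact ContDiff.sum fun i _ => (contDiff_pi.1 hf i).mul (contDiff_pi.1 hg i)
  have hαq : ContDiff ℝ (⊤ : ℕ∞) (fun q : ℝ × ℝ × ℝ × ℝ => α q.1) := hα.comp contDiff_fst
  have hα2q : ContDiff ℝ (⊤ : ℕ∞) (fun q : ℝ × ℝ × ℝ × ℝ => deriv (deriv α) q.1) :=
    hα2.comp contDiff_fst
  refine ⟨ContDiff.add hγ hαq,
    (ContDiff.sub hP (hdot _ _ hγ hα2q)).sub (contDiff_const.mul (hdot _ _ hαq hα2q)), ?_⟩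
  have ht : ∀ a b c, ContDiff ℝ (⊤ : ℕ∞) (fun s => γ s a b c) := fun a b c =>
    ContDiff.comp (f := fun s : ℝ => (s, a, b, c)) hγ (by fun_prop)
  have hne : ((⊤ : ℕ∞) : WithTop ℕ∞) ≠ 0 := by simp
  have g1 : ∀ t a b c, DifferentiableAt ℝ (fun s => γ t s b c) a := fun t a b c =>
    (ContDiff.comp (f := fun s : ℝ => (t, s, b, c)) hγ (by fun_prop)).differentiable hne a
  have g2 : ∀ t a b c, DifferentiableAt ℝ (fun s => γ t a s c) b := fun t a b c =>
    (ContDiff.comp (f := fun s : ℝ => (t, a, s, c)) hγ (by fun_prop)).differentiable hne b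
  have g3 : ∀ t a b c, DifferentiableAt ℝ (fun s => γ t a b s) c := fun t a b c =>
    (ContDiff.comp (f := fun s : ℝ => (t, a, b, s)) hγ (by fun_prop)).differentiable hne c
  have p1 : ∀ t a b c, DifferentiableAt ℝ (fun s => P t s b c) a := fun t a b c =>
    (ContDiff.comp (f := fun s : ℝ => (t, s, b, c)) hP (by fun_prop)).differentiable hne a
  have p2 : ∀ t a b c, DifferentiableAt ℝ (fun s => P t a s c) b := fun t a b c =>
    (ContDiff.comp (f := fun s : ℝ => (t, a, s, c)) hP (by fun_prop)).differentiable hne b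
  have p3 : ∀ t a b c, DifferentiableAt ℝ (fun s => P t a b s) c := fun t a b c =>
    (ContDiff.comp (f := fun s : ℝ => (t, a, b, s)) hP (by fun_prop)).differentiable hne c
  have e1 : D1 (fun t a b c => γ t a b c + α t) = D1 γ := by
    funext t a b c; simp only [D1, deriv_add_const]
  have e2 : D2 (fun t a b c => γ t a b c + α t) = D2 γ := by
    funext t a b c; simp only [D2, deriv_add_const]
  have e3 : D3 (fun t a b c => γ t a b c + α t) = D3 γ := by
    funext t a b c; simp only [D3, deriv_add_const]
  have et : Dt (fun t a b c => γ t a b c + α t) = fun t a b c => Dt γ t a b c + deriv α t := by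
    funext t a b c
    exact deriv_fun_add ((ht a b c).differentiable hne t) (hα.differentiable hne t)
  have ett : ∀ t a b c, Dt (Dt (fun t a b c => γ t a b c + α t)) t a b c
      = Dt (Dt γ) t a b c + deriv (deriv α) t := by
    intro t a b c
    rw [et]
    exact deriv_fun_add
      ((contDiff_infty_iff_deriv.1 (ht a b c)).2.differentiable hne t)
      (hα1.differentiable hne t)
  obtain ⟨h1, h2⟩ := hsol
  constructor
  · intro t a b c
    rw [ett, e1, e2, e3]
    have q1 := deriv_aux_slice _ _ (deriv (deriv α) t)
      ((1 / 2 : ℝ) * (α t ⬝ᵥ deriv (deriv α) t)) a (p1 t a b c) (g1 t a b c)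
    have q2 := deriv_aux_slice _ _ (deriv (deriv α) t)
      ((1 / 2 : ℝ) * (α t ⬝ᵥ deriv (deriv α) t)) b (p2 t a b c) (g2 t a b c)
    have q3 := deriv_aux_slice _ _ (deriv (deriv α) t)
      ((1 / 2 : ℝ) * (α t ⬝ᵥ deriv (deriv α) t)) c (p3 t a b c) (g3 t a b c)
    have h1 := h1 t a b c
    have h2 := h2 t a b c
    simp only [D1, D2, D3] at h1 h2 ⊢
    rw [q1, q2, q3]
    generalize deriv (deriv α) t = w at *
    generalize deriv (fun s => γ t s b c) a = u1 at *
    generalize deriv (fun s => γ t a s c) b = u2 at *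
    generalize deriv (fun s => γ t a b s) c = u3 at *
    rw [Matrix.det_fin_three] at h2
    simp at h2
    have k0 := congrFun h1 0
    have k1 := congrFun h1 1
    have k2 := congrFun h1 2
    simp [cross_apply] at k0 k1 k2
    have v0 : vecHead w = w 0 := rfl
    have v1 : vecHead (vecTail w) = w 1 := rfl
    have v2 : vecHead (vecTail (vecTail w)) = w 2 := rfl
    funext i
    fin_cases i <;> simp [cross_apply, dotProduct, Fin.sum_univ_three]
    · linear_combination k0 - w 0 * h2 + v0
    · linear_combination k1 - w 1 * h2 + v1
    · linear_combination k2 - w 2 * h2 + v2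
  · intro t a b c
    rw [e1, e2, e3]
    exact h2 t a b c
end
end

section
/- Let (γ, P) be a smooth solution of system (N) and let λ > 0. Then the pair (γ̄, P̄) defined by γ̄(t, ξ¹, ξ², ξ³) = λ² γ(t, ξ¹, λ⁻³ξ², λ⁻³ξ³) and P̄(t, ξ¹, ξ², ξ³) = λ⁴ P(t, ξ¹, λ⁻³ξ², λ⁻³ξ³) is again a smooth solution of system (N) (the dilatation symmetry generated by S₂ = 3ξ²∂_{ξ²} + 3ξ³∂_{ξ³} + 2γ·∂_γ + 4P∂_P). -/
open Matrix

noncomputable section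

section Helpers

variable {E : Type*} [NormedAddCommGroup E] [NormedSpace ℝ E]

theorem dil_Dt (f : ℝ → ℝ → ℝ → ℝ → E) (k m : ℝ) :
    Dt (fun t a b c => k • f t a (m * b) (m * c)) =
      fun t a b c => k • Dt f t a (m * b) (m * c) := by
  funext t a b c
  simp only [Dt]
  exact deriv_fun_const_smul_field k _

theorem dil_D1 (f : ℝ → ℝ → ℝ → ℝ → E) (k m : ℝ) :
    D1 (fun t a b c => k • f t a (m * b) (m * c)) =
      fun t a b c => k • D1 f t a (m * b) (m * c) := by
  funext t a b c
  simp only [D1]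
  exact deriv_fun_const_smul_field k _

theorem dil_D2 (f : ℝ → ℝ → ℝ → ℝ → E) (k m : ℝ) :
    D2 (fun t a b c => k • f t a (m * b) (m * c)) =
      fun t a b c => (k * m) • D2 f t a (m * b) (m * c) := by
  funext t a b c
  simp only [D2]
  rw [deriv_fun_const_smul_field, deriv_comp_mul_left m (fun s => f t a s (m * c)), smul_smul]

theorem dil_D3 (f : ℝ → ℝ → ℝ → ℝ → E) (k m : ℝ) :
    D3 (fun t a b c => k • f t a (m * b) (m * c)) =
      fun t a b c => (k * m) • D3 f t a (m * b) (m * c) := by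
  funext t a b c
  simp only [D3]
  rw [deriv_fun_const_smul_field, deriv_comp_mul_left m (fun s => f t a (m * b) s), smul_smul]

end Helpers

/-- Dilatation symmetry of system (N) generated by
`S₂ = 3ξ²∂_{ξ²} + 3ξ³∂_{ξ³} + 2γ·∂_γ + 4P∂_P`: if `(γ, P)` is a smooth solution
and `λ > 0`, then `γ̄(t,ξ¹,ξ²,ξ³) = λ² γ(t,ξ¹,λ⁻³ξ²,λ⁻³ξ³)`,
`P̄(t,ξ¹,ξ²,ξ³) = λ⁴ P(t,ξ¹,λ⁻³ξ²,λ⁻³ξ³)` is again a smooth solution. -/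
theorem dilatation_symmetry_systemN
    (γ : ℝ → ℝ → ℝ → ℝ → V3) (P : ℝ → ℝ → ℝ → ℝ → ℝ)
    (hγ : Smooth4 γ) (hP : Smooth4 P) (hsol : SystemN γ P)
    (l : ℝ) (hl : 0 < l) :
    Smooth4 (fun t a b c => (l ^ 2 : ℝ) • γ t a (l⁻¹ ^ 3 * b) (l⁻¹ ^ 3 * c)) ∧
    Smooth4 (fun t a b c => (l ^ 4 : ℝ) * P t a (l⁻¹ ^ 3 * b) (l⁻¹ ^ 3 * c)) ∧
    SystemN (fun t a b c => (l ^ 2 : ℝ) • γ t a (l⁻¹ ^ 3 * b) (l⁻¹ ^ 3 * c))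
      (fun t a b c => (l ^ 4 : ℝ) * P t a (l⁻¹ ^ 3 * b) (l⁻¹ ^ 3 * c)) := by
  have hl0 : l ≠ 0 := hl.ne'
  obtain ⟨h1, h2⟩ := hsol
  have hlin : ContDiff ℝ (⊤ : ℕ∞) (fun q : ℝ × ℝ × ℝ × ℝ =>
      ((q.1, q.2.1, l⁻¹ ^ 3 * q.2.2.1, l⁻¹ ^ 3 * q.2.2.2) : ℝ × ℝ × ℝ × ℝ)) := by
    fun_prop
  refine ⟨?_, ?_, ?_, ?_⟩
  · exact (ContDiff.comp hγ hlin).const_smul (l ^ 2)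
  · exact contDiff_const.mul (ContDiff.comp hP hlin)
  · intro t a b c
    have h := h1 t a (l⁻¹ ^ 3 * b) (l⁻¹ ^ 3 * c)
    rw [dil_Dt, dil_Dt, dil_D1, dil_D1, dil_D2, dil_D3]
    have hp := fun x y : ℝ => (smul_eq_mul x y).symm
    simp only [hp (l ^ 4)]
    rw [dil_D1, dil_D2, dil_D3]
    simp only [map_smul, LinearMap.smul_apply, smul_smul, smul_eq_mul]
    have e := congrArg (fun v => (l ^ 2 : ℝ) • v) h
    simp only [smul_zero, smul_add, smul_sub, smul_smul] at e
    rw [← e]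
    congr 1
    · congr 1
      · congr 2
        field_simp
      · congr 1
        field_simp
    · congr 1
      field_simp
  · intro t a b c
    have h := h2 t a (l⁻¹ ^ 3 * b) (l⁻¹ ^ 3 * c)
    rw [dil_D1, dil_D2, dil_D3]
    rw [Matrix.det_fin_three] at h ⊢
    simp at h ⊢
    field_simp at h ⊢
    linear_combination h
end
end

section
/- Let (γ, P) be a smooth solution of system (N), let a : ℝ² → ℝ be smooth, and let Ξ = (Ξ¹, Ξ²) : ℝ² → ℝ² be a smooth map whose Jacobian determinant is identically 1. Then the pair (γ̄, P̄) defined by γ̄(t, ξ¹, ξ², ξ³) = γ(t, ξ¹ + a(ξ², ξ³), Ξ¹(ξ², ξ³), Ξ²(ξ², ξ³)) and P̄(t, ξ¹, ξ², ξ³) = P(t, ξ¹ + a(ξ², ξ³), Ξ¹(ξ², ξ³), Ξ²(ξ², ξ³)) is again a smooth solution of system (N) (the reparametrization symmetry). -/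
open Matrix

noncomputable section

theorem chain4_aux {E : Type*} [NormedAddCommGroup E] [NormedSpace ℝ E]
    (f : ℝ → ℝ → ℝ → ℝ → E) (hf : Smooth4 f) (t : ℝ) (u v w : ℝ → ℝ) (du dv dw s : ℝ)
    (hu : HasDerivAt u du s) (hv : HasDerivAt v dv s) (hw : HasDerivAt w dw s) :
    deriv (fun s => f t (u s) (v s) (w s)) s
      = du • D1 f t (u s) (v s) (w s) + dv • D2 f t (u s) (v s) (w s)
        + dw • D3 f t (u s) (v s) (w s) := by
  have hd : Differentiable ℝ (fun q : ℝ × ℝ × ℝ × ℝ => f q.1 q.2.1 q.2.2.1 q.2.2.2) :=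
    ContDiff.differentiable hf (by simp)
  have hF := (hd (t, u s, v s, w s)).hasFDerivAt
  set L := fderiv ℝ (fun q : ℝ × ℝ × ℝ × ℝ => f q.1 q.2.1 q.2.2.1 q.2.2.2) (t, u s, v s, w s)
  have key : ∀ (x y z : ℝ → ℝ) (dx dy dz r : ℝ), HasDerivAt x dx r → HasDerivAt y dy r →
      HasDerivAt z dz r → x r = u s → y r = v s → z r = w s →
      deriv (fun s => f t (x s) (y s) (z s)) r = L (0, dx, dy, dz) := by
    intro x y z dx dy dz r hx hy hz ex ey ez
    have hc : HasDerivAt (fun s => (t, x s, y s, z s)) (0, dx, dy, dz) r :=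
      (hasDerivAt_const r t).prodMk (hx.prodMk (hy.prodMk hz))
    have hG : HasFDerivAt (fun q : ℝ × ℝ × ℝ × ℝ => f q.1 q.2.1 q.2.2.1 q.2.2.2) L
        ((fun s => (t, x s, y s, z s)) r) := by
      simpa only [ex, ey, ez] using hF
    exact (hG.comp_hasDerivAt r hc).deriv
  have k1 : D1 f t (u s) (v s) (w s) = L (0, 1, 0, 0) :=
    key (fun x => x) (fun _ => v s) (fun _ => w s) 1 0 0 (u s) (hasDerivAt_id _)
      (hasDerivAt_const _ _) (hasDerivAt_const _ _) rfl rfl rfl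
  have k2 : D2 f t (u s) (v s) (w s) = L (0, 0, 1, 0) :=
    key (fun _ => u s) (fun x => x) (fun _ => w s) 0 1 0 (v s) (hasDerivAt_const _ _)
      (hasDerivAt_id _) (hasDerivAt_const _ _) rfl rfl rfl
  have k3 : D3 f t (u s) (v s) (w s) = L (0, 0, 0, 1) :=
    key (fun _ => u s) (fun _ => v s) (fun x => x) 0 0 1 (w s) (hasDerivAt_const _ _)
      (hasDerivAt_const _ _) (hasDerivAt_id _) rfl rfl rfl
  rw [key u v w du dv dw s hu hv hw rfl rfl rfl, k1, k2, k3, ← map_smul, ← map_smul,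
    ← map_smul, ← map_add, ← map_add]
  simp

theorem smooth4_comp_aux {E : Type*} [NormedAddCommGroup E] [NormedSpace ℝ E]
    (f : ℝ → ℝ → ℝ → ℝ → E) (hf : Smooth4 f) (a Ξ₁ Ξ₂ : ℝ → ℝ → ℝ)
    (ha : ContDiff ℝ (⊤ : ℕ∞) (fun q : ℝ × ℝ => a q.1 q.2))
    (hΞ₁ : ContDiff ℝ (⊤ : ℕ∞) (fun q : ℝ × ℝ => Ξ₁ q.1 q.2))
    (hΞ₂ : ContDiff ℝ (⊤ : ℕ∞) (fun q : ℝ × ℝ => Ξ₂ q.1 q.2)) :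
    Smooth4 (fun t x1 b c => f t (x1 + a b c) (Ξ₁ b c) (Ξ₂ b c)) := by
  have h2 : ContDiff ℝ (⊤ : ℕ∞) (fun q : ℝ × ℝ × ℝ × ℝ => q.2.2) := by fun_prop
  have h1 : ContDiff ℝ (⊤ : ℕ∞) (fun q : ℝ × ℝ × ℝ × ℝ => q.2.1) := by fun_prop
  exact ContDiff.comp hf (contDiff_fst.prodMk
    ((h1.add (ha.comp h2)).prodMk ((hΞ₁.comp h2).prodMk (hΞ₂.comp h2))))

theorem partial_aux (g : ℝ → ℝ → ℝ) (hg : ContDiff ℝ (⊤ : ℕ∞) (fun q : ℝ × ℝ => g q.1 q.2))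
    (b c : ℝ) : HasDerivAt (fun s => g s c) (deriv (fun s => g s c) b) b ∧
      HasDerivAt (fun s => g b s) (deriv (fun s => g b s) c) c := by
  have hd : Differentiable ℝ (fun q : ℝ × ℝ => g q.1 q.2) := hg.differentiable (by simp)
  constructor
  · have h : Differentiable ℝ (fun s : ℝ => g s c) :=
      hd.comp (f := fun s : ℝ => (s, c)) (by fun_prop)
    exact (h b).hasDerivAt
  · have h : Differentiable ℝ (fun s : ℝ => g b s) :=
      hd.comp (f := fun s : ℝ => (b, s)) (by fun_prop)
    exact (h c).hasDerivAt

theorem D1_comp_aux {E : Type*} [NormedAddCommGroup E] [NormedSpace ℝ E]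
    (f : ℝ → ℝ → ℝ → ℝ → E) (a Ξ₁ Ξ₂ : ℝ → ℝ → ℝ) :
    D1 (fun t x1 b c => f t (x1 + a b c) (Ξ₁ b c) (Ξ₂ b c))
      = fun t x1 b c => D1 f t (x1 + a b c) (Ξ₁ b c) (Ξ₂ b c) := by
  funext t x b c
  exact deriv_comp_add_const (fun y => f t y (Ξ₁ b c) (Ξ₂ b c)) (a b c) x

theorem D2_comp_aux {E : Type*} [NormedAddCommGroup E] [NormedSpace ℝ E]
    (f : ℝ → ℝ → ℝ → ℝ → E) (hf : Smooth4 f) (a Ξ₁ Ξ₂ : ℝ → ℝ → ℝ)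
    (ha : ContDiff ℝ (⊤ : ℕ∞) (fun q : ℝ × ℝ => a q.1 q.2))
    (hΞ₁ : ContDiff ℝ (⊤ : ℕ∞) (fun q : ℝ × ℝ => Ξ₁ q.1 q.2))
    (hΞ₂ : ContDiff ℝ (⊤ : ℕ∞) (fun q : ℝ × ℝ => Ξ₂ q.1 q.2)) (t x b c : ℝ) :
    D2 (fun t x1 b c => f t (x1 + a b c) (Ξ₁ b c) (Ξ₂ b c)) t x b c
      = deriv (fun s => a s c) b • D1 f t (x + a b c) (Ξ₁ b c) (Ξ₂ b c)
        + deriv (fun s => Ξ₁ s c) b • D2 f t (x + a b c) (Ξ₁ b c) (Ξ₂ b c)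
        + deriv (fun s => Ξ₂ s c) b • D3 f t (x + a b c) (Ξ₁ b c) (Ξ₂ b c) :=
  chain4_aux f hf t (fun s => x + a s c) (fun s => Ξ₁ s c) (fun s => Ξ₂ s c) _ _ _ b
    ((partial_aux a ha b c).1.const_add x) (partial_aux Ξ₁ hΞ₁ b c).1 (partial_aux Ξ₂ hΞ₂ b c).1

theorem D3_comp_aux {E : Type*} [NormedAddCommGroup E] [NormedSpace ℝ E]
    (f : ℝ → ℝ → ℝ → ℝ → E) (hf : Smooth4 f) (a Ξ₁ Ξ₂ : ℝ → ℝ → ℝ)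
    (ha : ContDiff ℝ (⊤ : ℕ∞) (fun q : ℝ × ℝ => a q.1 q.2))
    (hΞ₁ : ContDiff ℝ (⊤ : ℕ∞) (fun q : ℝ × ℝ => Ξ₁ q.1 q.2))
    (hΞ₂ : ContDiff ℝ (⊤ : ℕ∞) (fun q : ℝ × ℝ => Ξ₂ q.1 q.2)) (t x b c : ℝ) :
    D3 (fun t x1 b c => f t (x1 + a b c) (Ξ₁ b c) (Ξ₂ b c)) t x b c
      = deriv (fun s => a b s) c • D1 f t (x + a b c) (Ξ₁ b c) (Ξ₂ b c)
        + deriv (fun s => Ξ₁ b s) c • D2 f t (x + a b c) (Ξ₁ b c) (Ξ₂ b c)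
        + deriv (fun s => Ξ₂ b s) c • D3 f t (x + a b c) (Ξ₁ b c) (Ξ₂ b c) :=
  chain4_aux f hf t (fun s => x + a b s) (fun s => Ξ₁ b s) (fun s => Ξ₂ b s) _ _ _ c
    ((partial_aux a ha b c).2.const_add x) (partial_aux Ξ₁ hΞ₁ b c).2 (partial_aux Ξ₂ hΞ₂ b c).2

theorem alg_aux (A B C X Y : V3) (p1 p2 p3 a2 a3 p q r s : ℝ) (hj : p * s - q * r = 1)
    (h : X - Y + p1 • crossProduct B C + p2 • crossProduct C A + p3 • crossProduct A B = 0) :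
    X - Y + p1 • crossProduct (a2 • A + p • B + r • C) (a3 • A + q • B + s • C)
      + (a2 • p1 + p • p2 + r • p3) • crossProduct (a3 • A + q • B + s • C) A
      + (a3 • p1 + q • p2 + s • p3) • crossProduct A (a2 • A + p • B + r • C) = 0 := by
  have h0 := congrFun h 0
  have h1 := congrFun h 1
  have h2 := congrFun h 2
  simp [cross_apply] at h0 h1 h2
  funext i
  fin_cases i
  · simp [cross_apply]
    linear_combination h0 + (p1 * (B 1 * C 2 - B 2 * C 1) + p2 * (C 1 * A 2 - C 2 * A 1)
      + p3 * (A 1 * B 2 - A 2 * B 1)) * hj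
  · simp [cross_apply]
    linear_combination h1 + (p1 * (B 2 * C 0 - B 0 * C 2) + p2 * (C 2 * A 0 - C 0 * A 2)
      + p3 * (A 2 * B 0 - A 0 * B 2)) * hj
  · simp [cross_apply]
    linear_combination h2 + (p1 * (B 0 * C 1 - B 1 * C 0) + p2 * (C 0 * A 1 - C 1 * A 0)
      + p3 * (A 0 * B 1 - A 1 * B 0)) * hj

theorem det_aux (A B C : V3) (a2 a3 p q r s : ℝ) (hj : p * s - q * r = 1)
    (h : (Matrix.of ![A, B, C]).det = 1) :
    (Matrix.of ![A, a2 • A + p • B + r • C, a3 • A + q • B + s • C]).det = 1 := by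
  rw [Matrix.det_fin_three] at h ⊢
  simp at h ⊢
  linear_combination (p * s - q * r) * h + hj

/-- Reparametrization symmetry of system (N): if `(γ, P)` is a smooth solution,
`a : ℝ² → ℝ` is smooth and `Ξ = (Ξ¹, Ξ²) : ℝ² → ℝ²` is a smooth map with Jacobian
determinant identically `1`, then
`γ̄(t,ξ¹,ξ²,ξ³) = γ(t, ξ¹ + a(ξ²,ξ³), Ξ¹(ξ²,ξ³), Ξ²(ξ²,ξ³))`,
`P̄(t,ξ¹,ξ²,ξ³) = P(t, ξ¹ + a(ξ²,ξ³), Ξ¹(ξ²,ξ³), Ξ²(ξ²,ξ³))` is again a smooth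
solution. -/
theorem reparametrization_symmetry_systemN
    (γ : ℝ → ℝ → ℝ → ℝ → V3) (P : ℝ → ℝ → ℝ → ℝ → ℝ)
    (hγ : Smooth4 γ) (hP : Smooth4 P) (hsol : SystemN γ P)
    (a : ℝ → ℝ → ℝ) (Ξ₁ Ξ₂ : ℝ → ℝ → ℝ)
    (ha : ContDiff ℝ (⊤ : ℕ∞) (fun q : ℝ × ℝ => a q.1 q.2))
    (hΞ₁ : ContDiff ℝ (⊤ : ℕ∞) (fun q : ℝ × ℝ => Ξ₁ q.1 q.2))
    (hΞ₂ : ContDiff ℝ (⊤ : ℕ∞) (fun q : ℝ × ℝ => Ξ₂ q.1 q.2))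
    (hjac : ∀ b c : ℝ,
      deriv (fun s => Ξ₁ s c) b * deriv (fun s => Ξ₂ b s) c
        - deriv (fun s => Ξ₁ b s) c * deriv (fun s => Ξ₂ s c) b = 1) :
    Smooth4 (fun t x1 b c => γ t (x1 + a b c) (Ξ₁ b c) (Ξ₂ b c)) ∧
    Smooth4 (fun t x1 b c => P t (x1 + a b c) (Ξ₁ b c) (Ξ₂ b c)) ∧
    SystemN (fun t x1 b c => γ t (x1 + a b c) (Ξ₁ b c) (Ξ₂ b c))
      (fun t x1 b c => P t (x1 + a b c) (Ξ₁ b c) (Ξ₂ b c)) := by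
  refine ⟨smooth4_comp_aux γ hγ a Ξ₁ Ξ₂ ha hΞ₁ hΞ₂, smooth4_comp_aux P hP a Ξ₁ Ξ₂ ha hΞ₁ hΞ₂,
    ?_, ?_⟩
  · intro t x b c
    rw [D1_comp_aux γ, D1_comp_aux (D1 γ), D1_comp_aux P, D2_comp_aux γ hγ a Ξ₁ Ξ₂ ha hΞ₁ hΞ₂,
      D3_comp_aux γ hγ a Ξ₁ Ξ₂ ha hΞ₁ hΞ₂, D2_comp_aux P hP a Ξ₁ Ξ₂ ha hΞ₁ hΞ₂,
      D3_comp_aux P hP a Ξ₁ Ξ₂ ha hΞ₁ hΞ₂]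
    exact alg_aux _ _ _ _ _ _ _ _ _ _ _ _ _ _ (hjac b c)
      (hsol.1 t (x + a b c) (Ξ₁ b c) (Ξ₂ b c))
  · intro t x b c
    rw [D1_comp_aux γ, D2_comp_aux γ hγ a Ξ₁ Ξ₂ ha hΞ₁ hΞ₂, D3_comp_aux γ hγ a Ξ₁ Ξ₂ ha hΞ₁ hΞ₂]
    exact det_aux _ _ _ _ _ _ _ _ _ (hjac b c) (hsol.2 t (x + a b c) (Ξ₁ b c) (Ξ₂ b c))
end
end

section
/- Let u : ℝ → ℝ, τ¹ : ℝ³ → ℝ, λ : ℝ³ → ℝ and τ², τ³ : ℝ² → ℝ be smooth, let P₀ ∈ ℝ, and define γ(t, ξ¹, ξ², ξ³) = ( u(t−ξ¹) + τ¹(μ, ξ², ξ³), τ²(μ, λ(μ, ξ², ξ³)), τ³(μ, λ(μ, ξ², ξ³)) ) with μ = t + ξ¹, and P ≡ P₀. Then (γ, P) is a solution of system (N) if and only if at every point (τ²₁ τ³_λ − τ²_λ τ³₁)·(λ₂ τ¹₃ − λ₃ τ¹₂) = 1, where τ²₁, τ³₁ and τ²_λ, τ³_λ denote the partial derivatives of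 τ², τ³ with respect to their first argument μ and second argument λ, τ¹ᵢ and λᵢ (i = 2,3) denote partial derivatives with respect to ξⁱ, all evaluated at the corresponding composed arguments. -/
open Matrix

noncomputable section

noncomputable def P2 {E : Type*} [NormedAddCommGroup E] [NormedSpace ℝ E]
    (f : ℝ → ℝ → ℝ → E) : ℝ → ℝ → ℝ → E :=
  fun s b c => deriv (fun x => f s x c) b

noncomputable def P3 {E : Type*} [NormedAddCommGroup E] [NormedSpace ℝ E]
    (f : ℝ → ℝ → ℝ → E) : ℝ → ℝ → ℝ → E :=
  fun s b c => deriv (fun x => f s b x) c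

noncomputable def Q1 (f : ℝ → ℝ → ℝ) : ℝ → ℝ → ℝ :=
  fun m l => deriv (fun x => f x l) m

noncomputable def Q2 (f : ℝ → ℝ → ℝ) : ℝ → ℝ → ℝ :=
  fun m l => deriv (fun x => f m x) l



theorem wave_t {E : Type*} [NormedAddCommGroup E] [NormedSpace ℝ E] (F G : ℝ → E)
    (hF : Differentiable ℝ F) (hG : Differentiable ℝ G) (a t : ℝ) :
    deriv (fun s => F (s - a) + G (s + a)) t = deriv F (t - a) + deriv G (t + a) := by
  have h1 : HasDerivAt (fun s : ℝ => F (s - a)) (deriv F (t - a)) t := by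
    simpa using (hF (t - a)).hasDerivAt.comp_sub_const t a
  have h2 : HasDerivAt (fun s : ℝ => G (s + a)) (deriv G (t + a)) t := by
    simpa using (hG (t + a)).hasDerivAt.comp_add_const t a
  exact (h1.add h2).deriv

theorem wave_a {E : Type*} [NormedAddCommGroup E] [NormedSpace ℝ E] (F G : ℝ → E)
    (hF : Differentiable ℝ F) (hG : Differentiable ℝ G) (a t : ℝ) :
    deriv (fun s => F (t - s) + G (t + s)) a = - deriv F (t - a) + deriv G (t + a) := by
  have h1 : HasDerivAt (fun s : ℝ => F (t - s)) (- deriv F (t - a)) a :=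
    (hF (t - a)).hasDerivAt.comp_const_sub t a
  have h2 : HasDerivAt (fun s : ℝ => G (t + s)) (deriv G (t + a)) a :=
    (hG (t + a)).hasDerivAt.comp_const_add t a
  exact (h1.add h2).deriv

theorem wave_eq {E : Type*} [NormedAddCommGroup E] [NormedSpace ℝ E] (F G : ℝ → E)
    (hF : ContDiff ℝ (⊤ : ℕ∞) F) (hG : ContDiff ℝ (⊤ : ℕ∞) G) (a t : ℝ) :
    deriv (fun x => deriv (fun s => F (s - a) + G (s + a)) x) t
      = deriv (fun x => deriv (fun s => F (t - s) + G (t + s)) x) a := by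
  have dF : Differentiable ℝ F := hF.differentiable (by simp)
  have dG : Differentiable ℝ G := hG.differentiable (by simp)
  have dF' : Differentiable ℝ (deriv F) :=
    ((contDiff_infty_iff_deriv.1 hF).2).differentiable (by simp)
  have dG' : Differentiable ℝ (deriv G) :=
    ((contDiff_infty_iff_deriv.1 hG).2).differentiable (by simp)
  have e1 : (fun x => deriv (fun s => F (s - a) + G (s + a)) x)
      = fun x => deriv F (x - a) + deriv G (x + a) := by
    funext x; exact wave_t F G dF dG a x
  have e2 : (fun x => deriv (fun s => F (t - s) + G (t + s)) x)
      = fun x => (fun y => - deriv F y) (t - x) + deriv G (t + x) := by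
    funext x; exact wave_a F G dF dG x t
  rw [e1, e2, wave_t _ _ dF' dG', wave_a (fun y => - deriv F y) _ dF'.fun_neg dG', deriv.fun_neg]
  simp

theorem chain2 (f : ℝ → ℝ → ℝ) (hf : Differentiable ℝ (fun q : ℝ × ℝ => f q.1 q.2))
    (x y : ℝ → ℝ) (s x' y' : ℝ) (hx : HasDerivAt x x' s) (hy : HasDerivAt y y' s) :
    HasDerivAt (fun r => f (x r) (y r)) (Q1 f (x s) (y s) * x' + Q2 f (x s) (y s) * y') s := by
  have h := (hf (x s, y s)).hasFDerivAt
  have e1 : Q1 f (x s) (y s) = fderiv ℝ (fun q : ℝ × ℝ => f q.1 q.2) (x s, y s) (1, 0) :=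
    (HasFDerivAt.comp_hasDerivAt (x s) (f := fun r => (r, y s)) h
      ((hasDerivAt_id (x s)).prodMk (hasDerivAt_const (x s) (y s)))).deriv
  have e2 : Q2 f (x s) (y s) = fderiv ℝ (fun q : ℝ × ℝ => f q.1 q.2) (x s, y s) (0, 1) :=
    (HasFDerivAt.comp_hasDerivAt (y s) (f := fun r => (x s, r)) h
      ((hasDerivAt_const (y s) (x s)).prodMk (hasDerivAt_id (y s)))).deriv
  have h3 := HasFDerivAt.comp_hasDerivAt s (f := fun r => (x r, y r)) h (hx.prodMk hy)
  have e3 : ((x', y') : ℝ × ℝ) = x' • ((1 : ℝ), (0 : ℝ)) + y' • ((0 : ℝ), (1 : ℝ)) := by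
    ext <;> simp
  rw [e3, map_add, map_smul, map_smul, ← e1, ← e2] at h3
  simpa [mul_comm, Function.comp_def] using h3

theorem deriv_vec3 (f g h : ℝ → ℝ) (s f' g' h' : ℝ) (hf : HasDerivAt f f' s)
    (hg : HasDerivAt g g' s) (hh : HasDerivAt h h' s) :
    deriv (fun r => (![f r, g r, h r] : V3)) s = ![f', g', h'] := by
  apply HasDerivAt.deriv
  rw [hasDerivAt_pi]
  intro i
  fin_cases i
  · simpa using hf
  · simpa using hg
  · simpa using hh

theorem contDiff_vec3 (f g h : ℝ → ℝ) (hf : ContDiff ℝ (⊤ : ℕ∞) f)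
    (hg : ContDiff ℝ (⊤ : ℕ∞) g) (hh : ContDiff ℝ (⊤ : ℕ∞) h) :
    ContDiff ℝ (⊤ : ℕ∞) (fun r => (![f r, g r, h r] : V3)) := by
  rw [contDiff_pi]
  intro i
  fin_cases i
  · simpa using hf
  · simpa using hg
  · simpa using hh

/-- The non-stationary constant-total-pressure solutions with dim{σ} = 2:
`γ = (u(t−ξ¹) + tau1(μ,ξ²,ξ³), tau2(μ,λ(μ,ξ²,ξ³)), tau3(μ,λ(μ,ξ²,ξ³)))`, `μ = t+ξ¹`,
with constant total pressure solves system (N) iff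
`(tau2₁ tau3_λ − tau2_λ tau3₁)(λ₂ tau1₃ − λ₃ tau1₂) = 1` at every point. -/
theorem nonstationary_dim2_solution
    (u : ℝ → ℝ) (tau1 lam : ℝ → ℝ → ℝ → ℝ) (tau2 tau3 : ℝ → ℝ → ℝ) (P₀ : ℝ)
    (hu : ContDiff ℝ (⊤ : ℕ∞) u)
    (htau1 : ContDiff ℝ (⊤ : ℕ∞) (fun q : ℝ × ℝ × ℝ => tau1 q.1 q.2.1 q.2.2))
    (hlam : ContDiff ℝ (⊤ : ℕ∞) (fun q : ℝ × ℝ × ℝ => lam q.1 q.2.1 q.2.2))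
    (htau2 : ContDiff ℝ (⊤ : ℕ∞) (fun q : ℝ × ℝ => tau2 q.1 q.2))
    (htau3 : ContDiff ℝ (⊤ : ℕ∞) (fun q : ℝ × ℝ => tau3 q.1 q.2)) :
    SystemN
      (fun t a b c =>
        ![u (t - a) + tau1 (t + a) b c,
          tau2 (t + a) (lam (t + a) b c),
          tau3 (t + a) (lam (t + a) b c)])
      (fun _ _ _ _ => P₀)
    ↔ ∀ m b c : ℝ,
        (Q1 tau2 m (lam m b c) * Q2 tau3 m (lam m b c)
            - Q2 tau2 m (lam m b c) * Q1 tau3 m (lam m b c))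
          * (P2 lam m b c * P3 tau1 m b c - P3 lam m b c * P2 tau1 m b c) = 1 := by
  have l1 : ∀ b c, ContDiff ℝ (⊤ : ℕ∞) (fun m => lam m b c) := fun b c =>
    hlam.comp (g := fun q : ℝ × ℝ × ℝ => lam q.1 q.2.1 q.2.2) (f := fun m : ℝ => (m, b, c))
      (by fun_prop)
  have l2 : ∀ m c, ContDiff ℝ (⊤ : ℕ∞) (fun b => lam m b c) := fun m c =>
    hlam.comp (g := fun q : ℝ × ℝ × ℝ => lam q.1 q.2.1 q.2.2) (f := fun b : ℝ => (m, b, c))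
      (by fun_prop)
  have l3 : ∀ m b, ContDiff ℝ (⊤ : ℕ∞) (fun c => lam m b c) := fun m b =>
    hlam.comp (g := fun q : ℝ × ℝ × ℝ => lam q.1 q.2.1 q.2.2) (f := fun c : ℝ => (m, b, c))
      (by fun_prop)
  have t1 : ∀ b c, ContDiff ℝ (⊤ : ℕ∞) (fun m => tau1 m b c) := fun b c =>
    htau1.comp (g := fun q : ℝ × ℝ × ℝ => tau1 q.1 q.2.1 q.2.2) (f := fun m : ℝ => (m, b, c))
      (by fun_prop)
  have t2 : ∀ m c, ContDiff ℝ (⊤ : ℕ∞) (fun b => tau1 m b c) := fun m c =>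
    htau1.comp (g := fun q : ℝ × ℝ × ℝ => tau1 q.1 q.2.1 q.2.2) (f := fun b : ℝ => (m, b, c))
      (by fun_prop)
  have t3 : ∀ m b, ContDiff ℝ (⊤ : ℕ∞) (fun c => tau1 m b c) := fun m b =>
    htau1.comp (g := fun q : ℝ × ℝ × ℝ => tau1 q.1 q.2.1 q.2.2) (f := fun c : ℝ => (m, b, c))
      (by fun_prop)
  have dtau2 : Differentiable ℝ (fun q : ℝ × ℝ => tau2 q.1 q.2) := htau2.differentiable (by simp)
  have dtau3 : Differentiable ℝ (fun q : ℝ × ℝ => tau3 q.1 q.2) := htau3.differentiable (by simp)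
  have hd : ∀ {f : ℝ → ℝ}, ContDiff ℝ (⊤ : ℕ∞) f → ∀ x, HasDerivAt f (deriv f x) x :=
    fun hf x => (hf.differentiable (by simp) x).hasDerivAt
  set γ : ℝ → ℝ → ℝ → ℝ → V3 := fun t a b c =>
        ![u (t - a) + tau1 (t + a) b c,
          tau2 (t + a) (lam (t + a) b c),
          tau3 (t + a) (lam (t + a) b c)] with hγ
  have wave : ∀ t a b c, Dt (Dt γ) t a b c = D1 (D1 γ) t a b c := by
    intro t a b c
    have hF := contDiff_vec3 u (fun _ => 0) (fun _ => 0) hu contDiff_const contDiff_const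
    have hG := contDiff_vec3 (fun m => tau1 m b c) (fun m => tau2 m (lam m b c))
      (fun m => tau3 m (lam m b c)) (t1 b c)
      (htau2.comp (g := fun q : ℝ × ℝ => tau2 q.1 q.2) (f := fun m => (m, lam m b c))
        (contDiff_id.prodMk (l1 b c)))
      (htau3.comp (g := fun q : ℝ × ℝ => tau3 q.1 q.2) (f := fun m => (m, lam m b c))
        (contDiff_id.prodMk (l1 b c)))
    have h := wave_eq _ _ hF hG a t
    simpa [Dt, D1, hγ] using h
  have e1 : ∀ t a b c, D1 γ t a b c =
      ![- deriv u (t - a) + deriv (fun m => tau1 m b c) (t + a),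
        Q1 tau2 (t + a) (lam (t + a) b c) * 1 + Q2 tau2 (t + a) (lam (t + a) b c)
          * deriv (fun m => lam m b c) (t + a),
        Q1 tau3 (t + a) (lam (t + a) b c) * 1 + Q2 tau3 (t + a) (lam (t + a) b c)
          * deriv (fun m => lam m b c) (t + a)] := by
    intro t a b c
    have hx : HasDerivAt (fun s : ℝ => t + s) 1 a := (hasDerivAt_id a).const_add t
    have hy : HasDerivAt (fun s : ℝ => lam (t + s) b c) (deriv (fun m => lam m b c) (t + a)) a :=
      (hd (l1 b c) (t + a)).comp_const_add t a
    exact deriv_vec3 _ _ _ _ _ _ _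
      (((hd hu (t - a)).comp_const_sub t a).add ((hd (t1 b c) (t + a)).comp_const_add t a))
      (chain2 tau2 dtau2 _ _ a _ _ hx hy) (chain2 tau3 dtau3 _ _ a _ _ hx hy)
  have e2 : ∀ t a b c, D2 γ t a b c =
      ![P2 tau1 (t + a) b c,
        Q1 tau2 (t + a) (lam (t + a) b c) * 0 + Q2 tau2 (t + a) (lam (t + a) b c)
          * P2 lam (t + a) b c,
        Q1 tau3 (t + a) (lam (t + a) b c) * 0 + Q2 tau3 (t + a) (lam (t + a) b c)
          * P2 lam (t + a) b c] := by
    intro t a b c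
    exact deriv_vec3 _ _ _ _ _ _ _ ((hd (t2 (t + a) c) b).const_add _)
      (chain2 tau2 dtau2 (fun _ => t + a) _ b _ _ (hasDerivAt_const _ _) (hd (l2 (t + a) c) b))
      (chain2 tau3 dtau3 (fun _ => t + a) _ b _ _ (hasDerivAt_const _ _) (hd (l2 (t + a) c) b))
  have e3 : ∀ t a b c, D3 γ t a b c =
      ![P3 tau1 (t + a) b c,
        Q1 tau2 (t + a) (lam (t + a) b c) * 0 + Q2 tau2 (t + a) (lam (t + a) b c)
          * P3 lam (t + a) b c,
        Q1 tau3 (t + a) (lam (t + a) b c) * 0 + Q2 tau3 (t + a) (lam (t + a) b c)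
          * P3 lam (t + a) b c] := by
    intro t a b c
    exact deriv_vec3 _ _ _ _ _ _ _ ((hd (t3 (t + a) b) c).const_add _)
      (chain2 tau2 dtau2 (fun _ => t + a) _ c _ _ (hasDerivAt_const _ _) (hd (l3 (t + a) b) c))
      (chain2 tau3 dtau3 (fun _ => t + a) _ c _ _ (hasDerivAt_const _ _) (hd (l3 (t + a) b) c))
  have hdet : ∀ t a b c, (Matrix.of ![D1 γ t a b c, D2 γ t a b c, D3 γ t a b c]).det =
      (Q1 tau2 (t + a) (lam (t + a) b c) * Q2 tau3 (t + a) (lam (t + a) b c)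
            - Q2 tau2 (t + a) (lam (t + a) b c) * Q1 tau3 (t + a) (lam (t + a) b c))
          * (P2 lam (t + a) b c * P3 tau1 (t + a) b c
            - P3 lam (t + a) b c * P2 tau1 (t + a) b c) := by
    intro t a b c
    rw [e1, e2, e3, Matrix.det_fin_three]
    simp
    ring
  constructor
  · rintro ⟨-, h⟩ m b c
    have := h m 0 b c
    rw [hdet] at this
    simpa using this
  · intro h
    refine ⟨fun t a b c => ?_, fun t a b c => ?_⟩
    · rw [wave]
      simp [D1, D2, D3]
    · rw [hdet]
      exact h _ _ _
end
end

section
/- Let u¹, u², τ³ : ℝ → ℝ and τ¹, τ² : ℝ³ → ℝ be smooth, let P₀ ∈ ℝ, and define γ(t, ξ¹, ξ², ξ³) = ( u¹(t−ξ¹) + τ¹(μ, ξ², ξ³), u²(t−ξ¹) + τ²(μ, ξ², ξ³), τ³(μ) ) with μ = t + ξ¹, and P ≡ P₀. Then (γ, P) is a solution of system (N) if and only if at every point (dτ³/dμ)·(τ¹₂ τ²₃ − τ¹₃ τ²₂) = 1, where τⁱⱼ denotes the partial derivative of τⁱ with respect to ξʲ (evaluated at (μ, ξ², ξ³)). -/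
open Matrix

noncomputable section

theorem wave_d1 (f g : ℝ → V3) (hf : Differentiable ℝ f) (hg : Differentiable ℝ g) (t a : ℝ) :
    deriv (fun s => f (s - a) + g (s + a)) t = deriv f (t - a) + deriv g (t + a)
    ∧ deriv (fun s => f (t - s) + g (t + s)) a = -deriv f (t - a) + deriv g (t + a) := by
  constructor
  · rw [deriv_fun_add (by fun_prop) (by fun_prop), deriv_comp_sub_const, deriv_comp_add_const]
  · rw [deriv_fun_add (by fun_prop) (by fun_prop), deriv_comp_const_sub, deriv_comp_const_add]

theorem wave_d2 (f g : ℝ → V3) (hf : ContDiff ℝ (⊤ : ℕ∞) f) (hg : ContDiff ℝ (⊤ : ℕ∞) g) (t a : ℝ) :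
    deriv (fun r => deriv (fun s => f (s - a) + g (s + a)) r) t
    = deriv (fun r => deriv (fun s => f (t - s) + g (t + s)) r) a := by
  have hf1 : Differentiable ℝ f := hf.differentiable (by simp)
  have hg1 : Differentiable ℝ g := hg.differentiable (by simp)
  have hf2 : Differentiable ℝ (deriv f) := (contDiff_infty_iff_deriv.1 hf).2.differentiable (by simp)
  have hg2 : Differentiable ℝ (deriv g) := (contDiff_infty_iff_deriv.1 hg).2.differentiable (by simp)
  have e1 : (fun r => deriv (fun s => f (s - a) + g (s + a)) r)
      = fun r => deriv f (r - a) + deriv g (r + a) := by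
    funext r; exact (wave_d1 f g hf1 hg1 r a).1
  have e2 : (fun r => deriv (fun s => f (t - s) + g (t + s)) r)
      = fun r => (fun x => -deriv f x) (t - r) + deriv g (t + r) := by
    funext r; exact (wave_d1 f g hf1 hg1 t r).2
  rw [e1, e2, (wave_d1 _ _ hf2 hg2 t a).1, (wave_d1 _ _ hf2.fun_neg hg2 t a).2]
  simp

theorem deriv_vec3_s12 (x y z : ℝ → ℝ) (hx : Differentiable ℝ x) (hy : Differentiable ℝ y)
    (hz : Differentiable ℝ z) (s : ℝ) :
    deriv (fun r => (![x r, y r, z r] : V3)) s = ![deriv x s, deriv y s, deriv z s] := by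
  apply HasDerivAt.deriv
  rw [hasDerivAt_pi]
  intro i
  fin_cases i
  · exact (hx s).hasDerivAt
  · exact (hy s).hasDerivAt
  · exact (hz s).hasDerivAt

/-- The non-stationary constant-total-pressure solutions with dim{σ} = 3:
`γ = (u¹(t−ξ¹) + τ¹(μ,ξ²,ξ³), u²(t−ξ¹) + τ²(μ,ξ²,ξ³), τ³(μ))`, `μ = t+ξ¹`,
with constant total pressure solves system (N) iff
`(dτ³/dμ)(τ¹₂ τ²₃ − τ¹₃ τ²₂) = 1` at every point. -/
theorem nonstationary_dim3_solution
    (u1 u2 tau3 : ℝ → ℝ) (tau1 tau2 : ℝ → ℝ → ℝ → ℝ) (P₀ : ℝ)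
    (hu1 : ContDiff ℝ (⊤ : ℕ∞) u1) (hu2 : ContDiff ℝ (⊤ : ℕ∞) u2) (htau3 : ContDiff ℝ (⊤ : ℕ∞) tau3)
    (htau1 : ContDiff ℝ (⊤ : ℕ∞) (fun q : ℝ × ℝ × ℝ => tau1 q.1 q.2.1 q.2.2))
    (htau2 : ContDiff ℝ (⊤ : ℕ∞) (fun q : ℝ × ℝ × ℝ => tau2 q.1 q.2.1 q.2.2)) :
    SystemN
      (fun t a b c =>
        ![u1 (t - a) + tau1 (t + a) b c,
          u2 (t - a) + tau2 (t + a) b c,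
          tau3 (t + a)])
      (fun _ _ _ _ => P₀)
    ↔ ∀ m b c : ℝ,
        deriv tau3 m
          * (P2 tau1 m b c * P3 tau2 m b c - P3 tau1 m b c * P2 tau2 m b c) = 1 := by
  have cvec : ∀ x y z : ℝ → ℝ, ContDiff ℝ (⊤ : ℕ∞) x → ContDiff ℝ (⊤ : ℕ∞) y →
      ContDiff ℝ (⊤ : ℕ∞) z → ContDiff ℝ (⊤ : ℕ∞) (fun r => (![x r, y r, z r] : V3)) := by
    intro x y z hx hy hz
    rw [contDiff_pi]
    intro i
    fin_cases i
    · exact hx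
    · exact hy
    · exact hz
  have m1 : ∀ tau : ℝ → ℝ → ℝ → ℝ,
      ContDiff ℝ (⊤ : ℕ∞) (fun q : ℝ × ℝ × ℝ => tau q.1 q.2.1 q.2.2) → ∀ b c,
      ContDiff ℝ (⊤ : ℕ∞) (fun m => tau m b c) := fun tau h b c =>
    h.comp (contDiff_id.prodMk (contDiff_const (c := (b, c))))
  have m2 : ∀ tau : ℝ → ℝ → ℝ → ℝ,
      ContDiff ℝ (⊤ : ℕ∞) (fun q : ℝ × ℝ × ℝ => tau q.1 q.2.1 q.2.2) → ∀ m c,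
      Differentiable ℝ (fun b => tau m b c) := fun tau h m c =>
    (h.comp ((contDiff_const (c := m)).prodMk (contDiff_id.prodMk (contDiff_const (c := c))))).differentiable
      (by simp)
  have m3 : ∀ tau : ℝ → ℝ → ℝ → ℝ,
      ContDiff ℝ (⊤ : ℕ∞) (fun q : ℝ × ℝ × ℝ => tau q.1 q.2.1 q.2.2) → ∀ m b,
      Differentiable ℝ (fun c => tau m b c) := fun tau h m b =>
    (h.comp ((contDiff_const (c := m)).prodMk ((contDiff_const (c := b)).prodMk contDiff_id))).differentiable
      (by simp)
  have du1 : Differentiable ℝ u1 := hu1.differentiable (by simp)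
  have du2 : Differentiable ℝ u2 := hu2.differentiable (by simp)
  have dt3 : Differentiable ℝ tau3 := htau3.differentiable (by simp)
  set γ : ℝ → ℝ → ℝ → ℝ → V3 := fun t a b c =>
        ![u1 (t - a) + tau1 (t + a) b c,
          u2 (t - a) + tau2 (t + a) b c,
          tau3 (t + a)] with hγ
  have hwave : ∀ t a b c, Dt (Dt γ) t a b c = D1 (D1 γ) t a b c := by
    intro t a b c
    have key := wave_d2 (fun x => ![u1 x, u2 x, 0])
      (fun x => ![tau1 x b c, tau2 x b c, tau3 x])
      (cvec _ _ _ hu1 hu2 contDiff_const)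
      (cvec _ _ _ (m1 _ htau1 b c) (m1 _ htau2 b c) htau3) t a
    simpa [Dt, D1, hγ] using key
  have hD1 : ∀ t a b c, ∃ p q, D1 γ t a b c = ![p, q, deriv tau3 (t + a)] := by
    intro t a b c
    have d1 : Differentiable ℝ (fun m => tau1 m b c) := (m1 _ htau1 b c).differentiable (by simp)
    have d2 : Differentiable ℝ (fun m => tau2 m b c) := (m1 _ htau2 b c).differentiable (by simp)
    refine ⟨deriv (fun s => u1 (t - s) + tau1 (t + s) b c) a,
      deriv (fun s => u2 (t - s) + tau2 (t + s) b c) a, (deriv_vec3_s12 _ _ _ ?_ ?_ ?_ a).trans ?_⟩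
    · exact (du1.comp (by fun_prop : Differentiable ℝ (fun s : ℝ => t - s))).add
        (d1.comp (by fun_prop : Differentiable ℝ (fun s : ℝ => t + s)))
    · exact (du2.comp (by fun_prop : Differentiable ℝ (fun s : ℝ => t - s))).add
        (d2.comp (by fun_prop : Differentiable ℝ (fun s : ℝ => t + s)))
    · exact dt3.comp (by fun_prop : Differentiable ℝ (fun s : ℝ => t + s))
    · rw [deriv_comp_const_add]
  have hD2 : ∀ t a b c, D2 γ t a b c = ![P2 tau1 (t + a) b c, P2 tau2 (t + a) b c, 0] := by
    intro t a b c
    refine (deriv_vec3_s12 _ _ _ ((m2 _ htau1 (t + a) c).const_add _)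
      ((m2 _ htau2 (t + a) c).const_add _) (differentiable_const _) b).trans ?_
    simp [P2]
  have hD3 : ∀ t a b c, D3 γ t a b c = ![P3 tau1 (t + a) b c, P3 tau2 (t + a) b c, 0] := by
    intro t a b c
    refine (deriv_vec3_s12 _ _ _ ((m3 _ htau1 (t + a) b).const_add _)
      ((m3 _ htau2 (t + a) b).const_add _) (differentiable_const _) c).trans ?_
    simp [P3]
  have hdet : ∀ t a b c, (Matrix.of ![D1 γ t a b c, D2 γ t a b c, D3 γ t a b c]).det
      = deriv tau3 (t + a) * (P2 tau1 (t + a) b c * P3 tau2 (t + a) b c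
          - P3 tau1 (t + a) b c * P2 tau2 (t + a) b c) := by
    intro t a b c
    obtain ⟨p, q, h⟩ := hD1 t a b c
    rw [h, hD2, hD3, Matrix.det_fin_three]
    simp
    ring
  constructor
  · rintro ⟨-, h⟩ m b c
    have := h m 0 b c
    rw [hdet] at this
    simpa using this
  · intro h
    refine ⟨fun t a b c => ?_, fun t a b c => ?_⟩
    · rw [hwave]
      simp [D1, D2, D3]
    · rw [hdet]
      exact h _ _ _
end
end
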